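/- arXiv:1407.6912 — 3 statements merged into one kernel-verified Lean document; each statement's English description precedes it below -/
import Mathlib

section
/- Let a₁, a₂, a₃ be nonzero real numbers that are pairwise distinct, let γ = diag(a₁,a₂,a₃), and let f : Matrix (Fin 3) (Fin 3) ℝ → ℂ be continuous with compact support. Then the function (x,y,z) ↦ f( u(x,y,z)⁻¹ · γ · u(x,y,z) ) is integrable on ℝ³ with respect to Lebesgue measure; i.e. the elliptic orbital integral ∫_{ℝ³} f(u(x,y,z)⁻¹ γ u(x,y,z)) dx dy dz converges absolutely. -/
open MeasureTheory

/-- The upper unitriangular matrix `u(x,y,z)` with rows `(1,x,z), (0,1,y), (0,0,1)`,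
parametrizing the unipotent radical `U` of the upper-triangular Borel subgroup of
`SL(3,ℝ)` by `(x,y,z) ∈ ℝ³`. -/
noncomputable def uMat (p : ℝ × ℝ × ℝ) : Matrix (Fin 3) (Fin 3) ℝ :=
  !![1, p.1, p.2.2; 0, 1, p.2.1; 0, 0, 1]

/-!
For `γ` diagonal with distinct entries, the entries of `u⁻¹ γ u` above the diagonal are nonzero
multiples of `x`, `y` and, up to a multiple of `x * y`, of `z`. So `(x, y, z)` can be read off
`u⁻¹ γ u` continuously, the map `u ↦ u⁻¹ γ u` is a closed embedding, and it pulls functions of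
compact support back to functions of compact support.
-/

theorem injective_vec_three {α : Type*} {a b c : α} (hab : a ≠ b) (hac : a ≠ c) (hbc : b ≠ c) :
    Function.Injective ![a, b, c] := by
  intro i j
  fin_cases i <;> fin_cases j <;> simp [hab, hac, hbc, hab.symm, hac.symm, hbc.symm]

theorem continuous_uMat : Continuous uMat := by
  refine continuous_matrix fun i j => ?_
  fin_cases i <;> fin_cases j
  exacts [continuous_const, continuous_fst, continuous_snd.snd,
    continuous_const, continuous_const, continuous_snd.fst,
    continuous_const, continuous_const, continuous_const]

theorem uMat_inv (p : ℝ × ℝ × ℝ) :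
    (uMat p)⁻¹ = uMat (-p.1, -p.2.1, p.1 * p.2.1 - p.2.2) := by
  apply Matrix.inv_eq_left_inv
  ext i j
  fin_cases i <;> fin_cases j <;> simp [uMat]
  ring

/-- The map `(x, y, z) ↦ u(x, y, z)⁻¹ γ u(x, y, z)` onto the `U`-conjugation orbit of the diagonal
matrix `γ` with entries `a`. -/
noncomputable def orbitMap (a : Fin 3 → ℝ) (p : ℝ × ℝ × ℝ) : Matrix (Fin 3) (Fin 3) ℝ :=
  (uMat p)⁻¹ * Matrix.diagonal a * uMat p

theorem orbitMap_eq (a : Fin 3 → ℝ) (p : ℝ × ℝ × ℝ) :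
    orbitMap a p =
      !![a 0, (a 0 - a 1) * p.1, (a 0 - a 2) * p.2.2 - (a 1 - a 2) * (p.1 * p.2.1);
        0, a 1, (a 1 - a 2) * p.2.1;
        0, 0, a 2] := by
  rw [orbitMap, uMat_inv]
  ext i j
  rw [Matrix.mul_apply]
  simp only [Matrix.mul_diagonal, Fin.sum_univ_three]
  fin_cases i <;> fin_cases j <;> simp [uMat] <;> ring

theorem continuous_orbitMap (a : Fin 3 → ℝ) : Continuous (orbitMap a) := by
  have continuous_uMat_inv : Continuous fun p => (uMat p)⁻¹ := by
    simp only [uMat_inv]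
    exact continuous_uMat.comp (by fun_prop)
  exact (continuous_uMat_inv.matrix_mul continuous_const).matrix_mul continuous_uMat

/-- The coordinates `(x, y, z)` of a point `M = u(x, y, z)⁻¹ γ u(x, y, z)` of the orbit of the
diagonal matrix `γ` with distinct entries `a`, extended by the same formula to all matrices `M`. -/
noncomputable def orbitCoords (a : Fin 3 → ℝ) (M : Matrix (Fin 3) (Fin 3) ℝ) : ℝ × ℝ × ℝ :=
  (M 0 1 / (a 0 - a 1), M 1 2 / (a 1 - a 2),
    (M 0 2 + M 0 1 / (a 0 - a 1) * M 1 2) / (a 0 - a 2))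

theorem continuous_orbitCoords (a : Fin 3 → ℝ) : Continuous (orbitCoords a) := by
  have continuous_entry (i j : Fin 3) : Continuous fun M : Matrix (Fin 3) (Fin 3) ℝ => M i j :=
    continuous_id.matrix_elem i j
  have continuous_x := (continuous_entry 0 1).div_const (a 0 - a 1)
  exact continuous_x.prodMk <| ((continuous_entry 1 2).div_const _).prodMk <|
    ((continuous_entry 0 2).add (continuous_x.mul (continuous_entry 1 2))).div_const _

theorem leftInverse_orbitCoords_orbitMap {a : Fin 3 → ℝ} (ha : Function.Injective a) :
    Function.LeftInverse (orbitCoords a) (orbitMap a) := by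
  have h₀₁ : a 0 - a 1 ≠ 0 := sub_ne_zero.mpr (ha.ne (by decide))
  have h₁₂ : a 1 - a 2 ≠ 0 := sub_ne_zero.mpr (ha.ne (by decide))
  have h₀₂ : a 0 - a 2 ≠ 0 := sub_ne_zero.mpr (ha.ne (by decide))
  rintro ⟨x, y, z⟩
  simp only [orbitCoords, orbitMap_eq, Matrix.of_apply, Matrix.cons_val, Prod.mk.injEq]
  refine ⟨?_, ?_, ?_⟩ <;> field_simp
  ring

theorem isClosedEmbedding_orbitMap {a : Fin 3 → ℝ} (ha : Function.Injective a) :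
    Topology.IsClosedEmbedding (orbitMap a) :=
  (leftInverse_orbitCoords_orbitMap ha).isClosedEmbedding
    (continuous_orbitCoords a) (continuous_orbitMap a)

theorem elliptic_orbital_integrable_general {E : Type*} [NormedAddCommGroup E]
    {a : Fin 3 → ℝ} (ha : Function.Injective a)
    (μ : Measure (ℝ × ℝ × ℝ)) [IsFiniteMeasureOnCompacts μ]
    {f : Matrix (Fin 3) (Fin 3) ℝ → E} (hf : Continuous f) (hsupp : HasCompactSupport f) :
    Integrable (fun p => f ((uMat p)⁻¹ * Matrix.diagonal a * uMat p)) μ :=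
  (hf.comp (continuous_orbitMap a)).integrable_of_hasCompactSupport
    (hsupp.comp_isClosedEmbedding (isClosedEmbedding_orbitMap ha))

/-- For `γ = diag(a₁,a₂,a₃)` with nonzero, pairwise distinct entries, and `f` continuous
with compact support, the elliptic orbital integral
`∫_{ℝ³} f(u(x,y,z)⁻¹ γ u(x,y,z)) dx dy dz` converges absolutely. -/
theorem elliptic_orbital_integrable
    (a₁ a₂ a₃ : ℝ) (h₁ : a₁ ≠ 0) (h₂ : a₂ ≠ 0) (h₃ : a₃ ≠ 0)
    (h₁₂ : a₁ ≠ a₂) (h₁₃ : a₁ ≠ a₃) (h₂₃ : a₂ ≠ a₃)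
    (f : Matrix (Fin 3) (Fin 3) ℝ → ℂ) (hf : Continuous f) (hsupp : HasCompactSupport f) :
    Integrable
      (fun p : ℝ × ℝ × ℝ => f ((uMat p)⁻¹ * Matrix.diagonal ![a₁, a₂, a₃] * uMat p)) :=
  elliptic_orbital_integrable_general (injective_vec_three h₁₂ h₁₃ h₂₃) volume hf hsupp
end

section
/- Let a₁, a₂, a₃ be nonzero real numbers that are pairwise distinct, let γ = diag(a₁,a₂,a₃), and let f : Matrix (Fin 3) (Fin 3) ℝ → ℂ be continuous with compact support. Then ∫_{ℝ³} f( u(x,y,z)⁻¹ · γ · u(x,y,z) ) dx dy dz = |a₁|²·|a₂| · |a₁−a₂|⁻¹ · |a₂−a₃|⁻¹ · |a₁−a₃|⁻¹ · ∫_{ℝ³} f( γ · u(x,y,z) ) dx dy dz. In particular the elliptic orbital integral of f over the conjugation orbit of γ by the unipotent group U equals, up to the explicit Jacobian factor ∏_{1≤i<j≤3} |a_i−a_j|⁻¹ times |a₁²a₂|, the integral of the translate of f by γ over U. -/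
open MeasureTheory

/-!
Writing `γ = diag(a₁,a₂,a₃)`, one has `u(p)⁻¹ γ u(p) = γ u(φ p)`, where `φ` rescales the three
coordinates by `(a₁-a₂)/a₁`, `(a₂-a₃)/a₂`, `(a₁-a₃)/a₁` and then shears `z` by a multiple of `xy`.
A shear preserves Lebesgue measure, so only the rescaling contributes to the Jacobian of `φ`.
-/

section ChangeOfVariables

variable {a b c : ℝ} {h : ℝ → ℝ → ℝ}

theorem measurePreserving_mul_left (hc : c ≠ 0) :
    MeasurePreserving (c * ·) volume (ENNReal.ofReal |c⁻¹| • volume) :=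
  ⟨measurable_const_mul c, Real.map_volume_mul_left hc⟩

theorem measurePreserving_mul_left_add (hc : c ≠ 0) (t : ℝ) :
    MeasurePreserving (fun z : ℝ => c * z + t) volume (ENNReal.ofReal |c⁻¹| • volume) :=
  ((measurePreserving_add_right volume t).smul_measure _).comp (measurePreserving_mul_left hc)

theorem measurePreserving_scale_shear (ha : a ≠ 0) (hb : b ≠ 0) (hc : c ≠ 0)
    (hh : Measurable h.uncurry) :
    MeasurePreserving
      (fun p : ℝ × ℝ × ℝ => (a * p.1, b * p.2.1, c * p.2.2 + h p.1 p.2.1))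
      volume (ENNReal.ofReal |(a * b * c)⁻¹| • volume) := by
  have fiber (x : ℝ) : MeasurePreserving (fun q : ℝ × ℝ => (b * q.1, c * q.2 + h x q.1))
      (volume.prod volume)
      ((ENNReal.ofReal |b⁻¹| • volume).prod (ENNReal.ofReal |c⁻¹| • volume)) :=
    (measurePreserving_mul_left hb).skew_product (g := fun y z => c * z + h x y) (by fun_prop)
      (.of_forall fun y => (measurePreserving_mul_left_add hc (h x y)).map_eq)
  have total := (measurePreserving_mul_left ha).skew_product
    (g := fun x (q : ℝ × ℝ) => (b * q.1, c * q.2 + h x q.1)) (by fun_prop)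
    (.of_forall fun x => (fiber x).map_eq)
  have density : ENNReal.ofReal |(a * b * c)⁻¹| =
      ENNReal.ofReal |a⁻¹| * (ENNReal.ofReal |b⁻¹| * ENNReal.ofReal |c⁻¹|) := by
    rw [← ENNReal.ofReal_mul (abs_nonneg _), ← ENNReal.ofReal_mul (abs_nonneg _), ← abs_mul,
      ← abs_mul, mul_inv, mul_inv, mul_assoc]
  rw [density]
  simpa only [Measure.prod_smul_left, Measure.prod_smul_right, smul_smul,
    ← Measure.volume_eq_prod, mul_comm, mul_left_comm] using total

theorem measurableEmbedding_scale_shear (ha : a ≠ 0) (hb : b ≠ 0) (hc : c ≠ 0)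
    (hh : Measurable h.uncurry) :
    MeasurableEmbedding
      (fun p : ℝ × ℝ × ℝ => (a * p.1, b * p.2.1, c * p.2.2 + h p.1 p.2.1)) := by
  refine Measurable.measurableEmbedding (by fun_prop) ?_
  rintro ⟨x, y, z⟩ ⟨x', y', z'⟩ heq
  obtain ⟨hx, hy, hz⟩ : a * x = a * x' ∧ b * y = b * y' ∧ c * z + h x y = c * z' + h x' y' := by
    simpa only [Prod.mk.injEq] using heq
  obtain rfl := mul_left_cancel₀ ha hx
  obtain rfl := mul_left_cancel₀ hb hy
  obtain rfl := mul_left_cancel₀ hc (add_right_cancel hz)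
  rfl

theorem integral_comp_scale_shear {E : Type*} [NormedAddCommGroup E] [NormedSpace ℝ E]
    (ha : a ≠ 0) (hb : b ≠ 0) (hc : c ≠ 0) (hh : Measurable h.uncurry) (g : ℝ × ℝ × ℝ → E) :
    ∫ p : ℝ × ℝ × ℝ, g (a * p.1, b * p.2.1, c * p.2.2 + h p.1 p.2.1) =
      |(a * b * c)⁻¹| • ∫ p, g p := by
  rw [(measurePreserving_scale_shear ha hb hc hh).integral_comp
    (measurableEmbedding_scale_shear ha hb hc hh) g, integral_smul_measure,
    ENNReal.toReal_ofReal (abs_nonneg _)]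

end ChangeOfVariables

theorem det_uMat (p : ℝ × ℝ × ℝ) : (uMat p).det = 1 := by
  simp [uMat, Matrix.det_fin_three]

theorem uMat_inv_mul_diagonal_mul_uMat {a₁ a₂ : ℝ} (h₁ : a₁ ≠ 0) (h₂ : a₂ ≠ 0) (a₃ : ℝ)
    (p : ℝ × ℝ × ℝ) :
    (uMat p)⁻¹ * Matrix.diagonal ![a₁, a₂, a₃] * uMat p =
      Matrix.diagonal ![a₁, a₂, a₃] *
        uMat ((a₁ - a₂) / a₁ * p.1, (a₂ - a₃) / a₂ * p.2.1,
          (a₁ - a₃) / a₁ * p.2.2 + (a₃ - a₂) / a₁ * (p.1 * p.2.1)) := by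
  have intertwine : Matrix.diagonal ![a₁, a₂, a₃] * uMat p =
      uMat p * (Matrix.diagonal ![a₁, a₂, a₃] *
        uMat ((a₁ - a₂) / a₁ * p.1, (a₂ - a₃) / a₂ * p.2.1,
          (a₁ - a₃) / a₁ * p.2.2 + (a₃ - a₂) / a₁ * (p.1 * p.2.1))) := by
    ext i j
    fin_cases i <;> fin_cases j <;>
      simp [uMat, Matrix.mul_apply, Fin.sum_univ_three] <;> field_simp <;> ring
  rw [mul_assoc, intertwine,
    Matrix.nonsing_inv_mul_cancel_left _ _ (det_uMat p ▸ isUnit_one)]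

theorem elliptic_orbital_integral_eq_general {E : Type*} [NormedAddCommGroup E] [NormedSpace ℝ E]
    {a₁ a₂ a₃ : ℝ} (h₁ : a₁ ≠ 0) (h₂ : a₂ ≠ 0) (h₁₂ : a₁ ≠ a₂) (h₁₃ : a₁ ≠ a₃) (h₂₃ : a₂ ≠ a₃)
    (f : Matrix (Fin 3) (Fin 3) ℝ → E) :
    ∫ p : ℝ × ℝ × ℝ, f ((uMat p)⁻¹ * Matrix.diagonal ![a₁, a₂, a₃] * uMat p)
      = (|a₁| ^ 2 * |a₂| * (|a₁ - a₂|⁻¹ * |a₂ - a₃|⁻¹ * |a₁ - a₃|⁻¹)) •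
          ∫ p : ℝ × ℝ × ℝ, f (Matrix.diagonal ![a₁, a₂, a₃] * uMat p) := by
  have jacobian : |((a₁ - a₂) / a₁ * ((a₂ - a₃) / a₂) * ((a₁ - a₃) / a₁))⁻¹| =
      |a₁| ^ 2 * |a₂| * (|a₁ - a₂|⁻¹ * |a₂ - a₃|⁻¹ * |a₁ - a₃|⁻¹) := by
    simp only [abs_mul, abs_div, mul_inv, inv_div]
    ring
  simp only [uMat_inv_mul_diagonal_mul_uMat h₁ h₂]
  rw [integral_comp_scale_shear (h := fun x y => (a₃ - a₂) / a₁ * (x * y))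
    (div_ne_zero (sub_ne_zero.mpr h₁₂) h₁) (div_ne_zero (sub_ne_zero.mpr h₂₃) h₂)
    (div_ne_zero (sub_ne_zero.mpr h₁₃) h₁) (by fun_prop)
    (fun q => f (Matrix.diagonal ![a₁, a₂, a₃] * uMat q)), jacobian]

/-- For `γ = diag(a₁,a₂,a₃)` with nonzero, pairwise distinct entries, and `f` continuous
with compact support, the elliptic orbital integral equals
`|a₁|²|a₂| · |a₁-a₂|⁻¹|a₂-a₃|⁻¹|a₁-a₃|⁻¹` times `∫_{ℝ³} f(γ·u(x,y,z)) dx dy dz`. -/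
theorem elliptic_orbital_integral_eq
    (a₁ a₂ a₃ : ℝ) (h₁ : a₁ ≠ 0) (h₂ : a₂ ≠ 0) (h₃ : a₃ ≠ 0)
    (h₁₂ : a₁ ≠ a₂) (h₁₃ : a₁ ≠ a₃) (h₂₃ : a₂ ≠ a₃)
    (f : Matrix (Fin 3) (Fin 3) ℝ → ℂ) (hf : Continuous f) (hsupp : HasCompactSupport f) :
    ∫ p : ℝ × ℝ × ℝ, f ((uMat p)⁻¹ * Matrix.diagonal ![a₁, a₂, a₃] * uMat p)
      = (|a₁| ^ 2 * |a₂| * (|a₁ - a₂|⁻¹ * |a₂ - a₃|⁻¹ * |a₁ - a₃|⁻¹)) •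
          ∫ p : ℝ × ℝ × ℝ, f (Matrix.diagonal ![a₁, a₂, a₃] * uMat p) :=
  elliptic_orbital_integral_eq_general h₁ h₂ h₁₂ h₁₃ h₂₃ f
end

section
/- Let f : SL(3,ℝ) → ℂ be continuous with compact support and let F_f(λ) = ∫₀^∞ sign(t−1) f(m(t,λ)) dt for 0 < |λ| < 1. Then lim_{λ → 0⁺} λ · F_f(λ) = ∫₀^∞ f( I₃ + s·E₁₂ ) ds, and lim_{λ → 0⁻} |λ| · F_f(λ) = ∫₀^∞ f( I₃ − s·E₁₂ ) ds; i.e. the orbital integral F_f(λ) has a singularity of exact order |λ|⁻¹ as λ → 0, with leading coefficient the unipotent orbital integral ∫₀^∞ f(I₃ + sign(λ)·s·E₁₂) ds. -/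
open MeasureTheory

/-- `SL(3,ℝ)`: the group of 3×3 real matrices of determinant 1. -/
abbrev SL3 := Matrix.SpecialLinearGroup (Fin 3) ℝ

/-- The topology on `SL(3,ℝ)` induced from the space of 3×3 real matrices. -/
noncomputable instance : TopologicalSpace SL3 :=
  TopologicalSpace.induced ((↑) : SL3 → Matrix (Fin 3) (Fin 3) ℝ) inferInstance

/-- The element `m(t,λ) ∈ SL(3,ℝ)` with rows `(√(1-λ²), tλ, 0), (-t⁻¹λ, √(1-λ²), 0),
(0,0,1)`, defined for `t > 0` and `|λ| < 1` (junk value `1` otherwise). -/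
noncomputable def mSL (t lam : ℝ) : SL3 :=
  if h : 0 < t ∧ |lam| < 1 then
    ⟨!![Real.sqrt (1 - lam ^ 2), t * lam, 0;
        -(t⁻¹ * lam), Real.sqrt (1 - lam ^ 2), 0;
        0, 0, 1], by
      have hl := abs_lt.mp h.2
      have h1 : (0:ℝ) ≤ 1 - lam ^ 2 := by nlinarith [hl.1, hl.2]
      have ht : t ≠ 0 := ne_of_gt h.1
      simp [Matrix.det_fin_three, Real.mul_self_sqrt h1]
      field_simp
      ring⟩
  else 1

/-- The orbital integral `F_f(λ) = ∫₀^∞ sign(t-1) · f(m(t,λ)) dt`. -/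
noncomputable def orbF (f : SL3 → ℂ) (lam : ℝ) : ℂ :=
  ∫ t in Set.Ioi (0:ℝ), (Real.sign (t - 1) : ℂ) * f (mSL t lam)

/-- The unipotent element `I₃ + s·E₁₂ ∈ SL(3,ℝ)`. -/
noncomputable def uSL (s : ℝ) : SL3 :=
  ⟨!![1, s, 0; 0, 1, 0; 0, 0, 1], by simp [Matrix.det_fin_three]⟩

/-!
After the substitution `t = s / r`, the integral `r * F_f(c r)` is taken over the matrices
`m(s / r, c r)`, whose `(1,2)` entry is `c s` for every `r`, and which converge to `I₃ + c s E₁₂` as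
`r → 0⁺`, while `sign (s / r - 1)` becomes `1`. Since the `(1,2)` entry does not depend on `r`, a
bound on `‖f g‖` by an integrable function of that entry dominates the integrands uniformly in `r`;
for compactly supported `f`, a multiple of the indicator of a compact set is such a bound. The
two one-sided limits are the cases `c = 1` and `c = -1`.
-/

open Filter Set Topology

theorem measurable_real_sign : Measurable Real.sign :=
  Measurable.ite measurableSet_Iio measurable_const
    (Measurable.ite measurableSet_Ioi measurable_const measurable_const)

theorem norm_ofReal_sign_le_one (x : ℝ) : ‖(Real.sign x : ℂ)‖ ≤ 1 := by
  rcases Real.sign_apply_eq x with h | h | h <;> simp [h]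

theorem exists_integrable_bound_comp_of_hasCompactSupport {X Y E : Type*} [TopologicalSpace X]
    [TopologicalSpace Y] [T2Space Y] [MeasurableSpace Y] [OpensMeasurableSpace Y]
    [NormedAddCommGroup E] {f : X → E} (hsupp : HasCompactSupport f) (hf : Continuous f)
    {p : X → Y} (hp : Continuous p) (μ : Measure Y) [IsFiniteMeasureOnCompacts μ] :
    ∃ φ : Y → ℝ, Integrable φ μ ∧ ∀ x, ‖f x‖ ≤ φ (p x) := by
  obtain ⟨M, hM⟩ := hsupp.exists_bound_of_continuous hf
  have hK : IsCompact (p '' tsupport f) := hsupp.isCompact.image hp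
  refine ⟨(p '' tsupport f).indicator fun _ => M, ?_, fun x => ?_⟩
  · exact (integrable_indicator_iff hK.measurableSet).2 (integrableOn_const hK.measure_lt_top.ne)
  · by_cases hx : x ∈ tsupport f
    · rw [indicator_of_mem (mem_image_of_mem p hx)]
      exact hM x
    · rw [image_eq_zero_of_notMem_tsupport hx, norm_zero]
      exact indicator_nonneg (fun _ _ => (norm_nonneg _).trans (hM x)) _

theorem isInducing_coe_SL3 : IsInducing fun g : SL3 => (g : Matrix (Fin 3) (Fin 3) ℝ) :=
  ⟨rfl⟩

theorem eventually_pos_and_abs_mul_lt_one (c : ℝ) :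
    ∀ᶠ r : ℝ in 𝓝[>] 0, 0 < r ∧ |c * r| < 1 := by
  have hsmall : ∀ᶠ r : ℝ in 𝓝 0, |c * r| < 1 :=
    (by fun_prop : Continuous fun r : ℝ => |c * r|).continuousAt.eventually_lt_const (by simp)
  exact eventually_mem_nhdsWithin.and (hsmall.filter_mono nhdsWithin_le_nhds)

/-- The matrix of `m(s / r, c r)`, simplified so that it also makes sense at `r = 0`, where it is
the unipotent matrix `I₃ + c s E₁₂`. -/
noncomputable def rescaledMatrix (c r s : ℝ) : Matrix (Fin 3) (Fin 3) ℝ :=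
  !![√(1 - (c * r) ^ 2), c * s, 0;
     -(c * r ^ 2 * s⁻¹), √(1 - (c * r) ^ 2), 0;
     0, 0, 1]

theorem coe_mSL_inv_mul {c r s : ℝ} (hr : 0 < r) (hs : 0 < s) (hcr : |c * r| < 1) :
    (mSL (r⁻¹ * s) (c * r) : Matrix (Fin 3) (Fin 3) ℝ) = rescaledMatrix c r s := by
  have hupper : r⁻¹ * s * (c * r) = c * s := by field_simp
  have hlower : (r⁻¹ * s)⁻¹ * (c * r) = c * r ^ 2 * s⁻¹ := by field_simp
  have hmSL : mSL (r⁻¹ * s) (c * r) = _ := dif_pos ⟨by positivity, hcr⟩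
  rw [rescaledMatrix, ← hupper, ← hlower]
  exact congrArg Subtype.val hmSL

theorem rescaledMatrix_zero (c s : ℝ) : rescaledMatrix c 0 s = uSL (c * s) := by
  simp [rescaledMatrix, uSL]

theorem continuousOn_rescaledMatrix (c : ℝ) :
    ContinuousOn (rescaledMatrix c).uncurry (univ ×ˢ Ioi 0) := by
  have hdiag : ContinuousOn (fun p : ℝ × ℝ => √(1 - (c * p.1) ^ 2)) (univ ×ˢ Ioi 0) := by fun_prop
  have hupper : ContinuousOn (fun p : ℝ × ℝ => c * p.2) (univ ×ˢ Ioi 0) := by fun_prop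
  have hlower : ContinuousOn (fun p : ℝ × ℝ => -(c * p.1 ^ 2 * p.2⁻¹)) (univ ×ˢ Ioi 0) :=
    ((by fun_prop : Continuous fun p : ℝ × ℝ => c * p.1 ^ 2).continuousOn.mul
      (continuousOn_snd.inv₀ fun _ hp => hp.2.ne')).neg
  refine continuousOn_pi.2 fun i => continuousOn_pi.2 fun j => ?_
  fin_cases i <;> fin_cases j
  exacts [hdiag, hupper, continuousOn_const, hlower, hdiag, continuousOn_const,
    continuousOn_const, continuousOn_const, continuousOn_const]

theorem continuousOn_mSL_inv_mul {c r : ℝ} (hr : 0 < r) (hcr : |c * r| < 1) :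
    ContinuousOn (fun s => mSL (r⁻¹ * s) (c * r)) (Ioi 0) := by
  have hcont : ContinuousOn (rescaledMatrix c r) (Ioi 0) :=
    (continuousOn_rescaledMatrix c).uncurry_left r (mem_univ r)
  exact isInducing_coe_SL3.continuousOn_iff.2 (hcont.congr fun s hs => coe_mSL_inv_mul hr hs hcr)

theorem tendsto_mSL_inv_mul (c : ℝ) {s : ℝ} (hs : 0 < s) :
    Tendsto (fun r => mSL (r⁻¹ * s) (c * r)) (𝓝[>] 0) (𝓝 (uSL (c * s))) := by
  rw [isInducing_coe_SL3.tendsto_nhds_iff, ← rescaledMatrix_zero]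
  have hcont : Continuous fun r => rescaledMatrix c r s :=
    continuousOn_univ.1 ((continuousOn_rescaledMatrix c).uncurry_right s hs)
  refine (hcont.continuousAt.mono_left nhdsWithin_le_nhds).congr' ?_
  filter_upwards [eventually_pos_and_abs_mul_lt_one c] with r ⟨hr, hcr⟩
  exact (coe_mSL_inv_mul hr hs hcr).symm

theorem tendsto_sign_inv_mul_sub_one {s : ℝ} (hs : 0 < s) :
    Tendsto (fun r => (Real.sign (r⁻¹ * s - 1) : ℂ)) (𝓝[>] 0) (𝓝 1) := by
  refine tendsto_const_nhds.congr' ?_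
  filter_upwards [Ioo_mem_nhdsGT hs] with r ⟨hr, hrs⟩
  have hpos : 0 < r⁻¹ * s - 1 := by rwa [sub_pos, inv_mul_eq_div, one_lt_div hr]
  rw [Real.sign_of_pos hpos, Complex.ofReal_one]

section OrbitalIntegral

theorem ofReal_mul_orbF (f : SL3 → ℂ) (lam : ℝ) {r : ℝ} (hr : 0 < r) :
    (r : ℂ) * orbF f lam =
      ∫ s in Ioi (0 : ℝ), (Real.sign (r⁻¹ * s - 1) : ℂ) * f (mSL (r⁻¹ * s) lam) := by
  simpa only [orbF, mul_zero, inv_inv, Complex.real_smul] using (integral_comp_mul_left_Ioi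
    (fun t => (Real.sign (t - 1) : ℂ) * f (mSL t lam)) 0 (inv_pos.2 hr)).symm

variable {f : SL3 → ℂ} {φ : ℝ → ℝ}

theorem aestronglyMeasurable_sign_mul_comp_mSL (hf : Continuous f) {c r : ℝ} (hr : 0 < r)
    (hcr : |c * r| < 1) :
    AEStronglyMeasurable
      (fun s : ℝ => (Real.sign (r⁻¹ * s - 1) : ℂ) * f (mSL (r⁻¹ * s) (c * r)))
      (volume.restrict (Ioi 0)) := by
  have hsign : Measurable fun s : ℝ => (Real.sign (r⁻¹ * s - 1) : ℂ) :=
    Complex.measurable_ofReal.comp (measurable_real_sign.comp (by fun_prop))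
  exact hsign.aestronglyMeasurable.mul
    ((hf.comp_continuousOn (continuousOn_mSL_inv_mul hr hcr)).aestronglyMeasurable
      measurableSet_Ioi)

theorem norm_sign_mul_comp_mSL_le (hfφ : ∀ g : SL3, ‖f g‖ ≤ φ (g 0 1)) {c r s : ℝ}
    (hr : 0 < r) (hs : 0 < s) (hcr : |c * r| < 1) :
    ‖(Real.sign (r⁻¹ * s - 1) : ℂ) * f (mSL (r⁻¹ * s) (c * r))‖ ≤ φ (c * s) := by
  have hentry : mSL (r⁻¹ * s) (c * r) 0 1 = c * s :=
    congrArg (fun A : Matrix (Fin 3) (Fin 3) ℝ => A 0 1) (coe_mSL_inv_mul hr hs hcr)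
  calc ‖(Real.sign (r⁻¹ * s - 1) : ℂ) * f (mSL (r⁻¹ * s) (c * r))‖
      ≤ ‖f (mSL (r⁻¹ * s) (c * r))‖ := by
        rw [norm_mul]
        exact mul_le_of_le_one_left (norm_nonneg _) (norm_ofReal_sign_le_one _)
    _ ≤ φ (c * s) := hentry ▸ hfφ _

theorem tendsto_ofReal_mul_orbF (hf : Continuous f) (hφ : Integrable φ)
    (hfφ : ∀ g : SL3, ‖f g‖ ≤ φ (g 0 1)) {c : ℝ} (hc : c ≠ 0) :
    Tendsto (fun r : ℝ => (r : ℂ) * orbF f (c * r)) (𝓝[>] 0)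
      (𝓝 (∫ s in Ioi (0 : ℝ), f (uSL (c * s)))) := by
  have hsmall := eventually_pos_and_abs_mul_lt_one c
  suffices hlim : Tendsto (fun r : ℝ => ∫ s in Ioi (0 : ℝ),
      (Real.sign (r⁻¹ * s - 1) : ℂ) * f (mSL (r⁻¹ * s) (c * r))) (𝓝[>] 0)
      (𝓝 (∫ s in Ioi (0 : ℝ), f (uSL (c * s)))) from
    hlim.congr' (hsmall.mono fun r hr => (ofReal_mul_orbF f (c * r) hr.1).symm)
  refine tendsto_integral_filter_of_dominated_convergence (fun s => φ (c * s)) ?_ ?_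
    (hφ.comp_mul_left' hc).integrableOn ?_
  · exact hsmall.mono fun r hr => aestronglyMeasurable_sign_mul_comp_mSL hf hr.1 hr.2
  · filter_upwards [hsmall] with r ⟨hr, hcr⟩
    filter_upwards [ae_restrict_mem measurableSet_Ioi] with s hs
    exact norm_sign_mul_comp_mSL_le hfφ hr hs hcr
  · filter_upwards [ae_restrict_mem measurableSet_Ioi] with s hs
    simpa only [one_mul, Function.comp_apply] using (tendsto_sign_inv_mul_sub_one hs).mul
      ((hf.tendsto _).comp (tendsto_mSL_inv_mul c hs))

theorem orbital_integral_singularity_general (hf : Continuous f) (hφ : Integrable φ)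
    (hfφ : ∀ g : SL3, ‖f g‖ ≤ φ (g 0 1)) :
    Tendsto (fun lam : ℝ => (lam : ℂ) * orbF f lam) (𝓝[>] 0)
      (𝓝 (∫ s in Ioi (0 : ℝ), f (uSL s))) ∧
    Tendsto (fun lam : ℝ => ((|lam| : ℝ) : ℂ) * orbF f lam) (𝓝[<] 0)
      (𝓝 (∫ s in Ioi (0 : ℝ), f (uSL (-s)))) := by
  constructor
  · simpa only [one_mul] using tendsto_ofReal_mul_orbF hf hφ hfφ one_ne_zero
  · have hneg : Tendsto (fun lam : ℝ => -lam) (𝓝[<] 0) (𝓝[>] 0) := by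
      simpa only [neg_zero] using tendsto_neg_nhdsLT (a := (0 : ℝ))
    have hlim := (tendsto_ofReal_mul_orbF hf hφ hfφ (neg_ne_zero.2 one_ne_zero)).comp hneg
    simp only [neg_one_mul] at hlim
    refine hlim.congr' (eventually_mem_nhdsWithin.mono fun lam hlam => ?_)
    simp only [Function.comp_apply, neg_neg, abs_of_neg (mem_Iio.1 hlam)]

end OrbitalIntegral

/-- As `λ → 0⁺`, `λ·F_f(λ) → ∫₀^∞ f(I₃ + s·E₁₂) ds`, and as `λ → 0⁻`,
`|λ|·F_f(λ) → ∫₀^∞ f(I₃ - s·E₁₂) ds`: the orbital integral has a singularity of exact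
order `|λ|⁻¹` with leading coefficient the unipotent orbital integral. -/
theorem orbital_integral_singularity
    (f : SL3 → ℂ) (hf : Continuous f) (hsupp : HasCompactSupport f) :
    Filter.Tendsto (fun lam : ℝ => (lam : ℂ) * orbF f lam)
      (nhdsWithin 0 (Set.Ioi 0))
      (nhds (∫ s in Set.Ioi (0:ℝ), f (uSL s))) ∧
    Filter.Tendsto (fun lam : ℝ => ((|lam| : ℝ) : ℂ) * orbF f lam)
      (nhdsWithin 0 (Set.Iio 0))
      (nhds (∫ s in Set.Ioi (0:ℝ), f (uSL (-s)))) := by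
  obtain ⟨φ, hφ, hfφ⟩ := exists_integrable_bound_comp_of_hasCompactSupport hsupp hf
    (isInducing_coe_SL3.continuous.matrix_elem 0 1) volume
  exact orbital_integral_singularity_general hf hφ hfφ
end
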